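/- Let (X, ω) be a 2n-dimensional closed symplectic manifold and let k ≤ n. Then H^k_dR(X;ℝ) = ⊕_{r∈ℕ} H^{(r,k−2r)}_ω(X;ℝ) if and only if H^k_dR(X;ℝ) = ⊕_{r∈ℕ} L^r H^{(0,k−2r)}_ω(X;ℝ). -/

import Mathlib

open Submodule

noncomputable section

/-- An algebraic model of the de Rham complex of a closed (compact, without boundary)
smooth manifold `X` of dimension `2 * n` endowed with a symplectic structure `ω`
(a non-degenerate `d`-closed `2`-form): `M` is the space of (inhomogeneous) real smooth
differential forms, `Ω k` the subspace of `k`-forms, `d` the exterior differential,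
`wedge` the wedge product, `ω` the symplectic form (so that `wedge ω` is the Lefschetz
operator `L`), `Λ = -ι_{ω⁻¹}` the dual Lefschetz operator, and `integral` the integration
of top-degree forms over the closed manifold `X`. -/
structure ClosedSymplecticManifold (n : ℕ) where
  M : Type*
  [acg : AddCommGroup M]
  [mod : Module ℝ M]
  Ω : ℤ → Submodule ℝ M
  Ω_neg : ∀ k : ℤ, k < 0 → Ω k = ⊥
  Ω_top : ∀ k : ℤ, 2 * (n : ℤ) < k → Ω k = ⊥
  Ω_internal : DirectSum.IsInternal Ω
  d : M →ₗ[ℝ] M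
  d_mem : ∀ (k : ℤ), ∀ α ∈ Ω k, d α ∈ Ω (k + 1)
  d_d : ∀ α, d (d α) = 0
  wedge : M →ₗ[ℝ] M →ₗ[ℝ] M
  wedge_mem : ∀ (k l : ℤ), ∀ α ∈ Ω k, ∀ β ∈ Ω l, wedge α β ∈ Ω (k + l)
  wedge_assoc : ∀ α β γ, wedge (wedge α β) γ = wedge α (wedge β γ)
  one : M
  one_mem : one ∈ Ω 0
  one_wedge : ∀ α, wedge one α = α
  wedge_comm : ∀ (k l : ℤ), ∀ α ∈ Ω k, ∀ β ∈ Ω l,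
      wedge α β = ((-1 : ℝ) ^ (k * l)) • wedge β α
  leibniz : ∀ (k : ℤ), ∀ α ∈ Ω k, ∀ β,
      d (wedge α β) = wedge (d α) β + ((-1 : ℝ) ^ k) • wedge α (d β)
  ω : M
  ω_mem : ω ∈ Ω 2
  dω : d ω = 0
  /-- non-degeneracy of `ω`: `L^k : Ω^{n-k} → Ω^{n+k}` is injective … -/
  lefschetz_inj : ∀ k : ℕ, k ≤ n → ∀ α ∈ Ω ((n : ℤ) - k), (wedge ω ^ k) α = 0 → α = 0
  /-- … and surjective. -/
  lefschetz_surj : ∀ k : ℕ, k ≤ n → ∀ β ∈ Ω ((n : ℤ) + k),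
      ∃ α ∈ Ω ((n : ℤ) - k), (wedge ω ^ k) α = β
  Λ : M →ₗ[ℝ] M
  Λ_mem : ∀ (k : ℤ), ∀ α ∈ Ω k, Λ α ∈ Ω (k - 2)
  /-- the `𝔰𝔩(2;ℝ)`-commutation relation `[Λ, L] = (n - k)·id` on `k`-forms -/
  sl2 : ∀ (k : ℤ), ∀ α ∈ Ω k, Λ (wedge ω α) - wedge ω (Λ α) = ((n : ℤ) - k) • α
  /-- a `k`-form `β` is primitive iff `Λ β = 0` iff `L^{n-k+1} β = 0` -/
  primitive_iff : ∀ k : ℕ, k ≤ n → ∀ α ∈ Ω (k : ℤ),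
      (Λ α = 0 ↔ (wedge ω ^ (n - k + 1)) α = 0)
  integral : M →ₗ[ℝ] ℝ
  integral_ne_top : ∀ (k : ℤ), k ≠ 2 * (n : ℤ) → ∀ α ∈ Ω k, integral α = 0
  /-- Stokes' theorem on the closed manifold `X` -/
  stokes : ∀ α, integral (d α) = 0
  /-- positivity of the symplectic volume: for a function `f ≠ 0`, `∫_X f·f·ωⁿ > 0` -/
  volume_pos : ∀ f ∈ Ω 0, f ≠ 0 → 0 < integral (wedge f (wedge f ((wedge ω ^ n) one)))
  /-- Poincaré duality: non-degeneracy of the intersection pairing on cohomology -/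
  poincare_duality : ∀ (k : ℤ), ∀ α ∈ Ω k, d α = 0 →
      (∀ β ∈ Ω (2 * (n : ℤ) - k), d β = 0 → integral (wedge α β) = 0) →
      α ∈ (Ω (k - 1)).map d

attribute [instance] ClosedSymplecticManifold.acg ClosedSymplecticManifold.mod

namespace ClosedSymplecticManifold

variable {n : ℕ} (S : ClosedSymplecticManifold n)

/-- the Lefschetz operator `L = ω ∧ ·` -/
def L : S.M →ₗ[ℝ] S.M := S.wedge S.ω

/-- closed `k`-forms -/
def Zc (k : ℤ) : Submodule ℝ S.M := S.Ω k ⊓ LinearMap.ker S.d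

/-- exact `k`-forms -/
def Bc (k : ℤ) : Submodule ℝ S.M := (S.Ω (k - 1)).map S.d

/-- the de Rham cohomology group `H^k_{dR}(X; ℝ)` -/
abbrev Hc (k : ℤ) := ↥(S.Zc k) ⧸ (S.Bc k).comap (S.Zc k).subtype

/-- the de Rham cohomology class of a closed `k`-form -/
abbrev cls (k : ℤ) (a : S.Zc k) : S.Hc k := Submodule.Quotient.mk a

/-- the subgroup `H^{(r, k-2r)}_ω(X; ℝ) ⊆ H^k_{dR}(X;ℝ)` of classes admitting a representative
`L^r β` with `β` a primitive `(k - 2r)`-form -/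
def Hsub (k : ℤ) (r : ℕ) : Submodule ℝ (S.Hc k) :=
  ((((S.Ω (k - 2 * r) ⊓ LinearMap.ker S.Λ).map (S.L ^ r)).comap (S.Zc k).subtype)).map
    ((S.Bc k).comap (S.Zc k).subtype).mkQ

end ClosedSymplecticManifold

namespace ClosedSymplecticManifold

variable {n : ℕ} (S : ClosedSymplecticManifold n)

/-- `L^r H^{(0, k-2r)}_ω(X;ℝ) ⊆ H^k_dR(X;ℝ)`: the image of `H^{(0, k-2r)}_ω(X;ℝ)` under cup
product with `[ω]^r`, i.e. the classes `[ω^r] ⌣ [β] = [L^r β]` with `β` a `d`-closed primitive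
`(k-2r)`-form. -/
def LrH0 (k : ℤ) (r : ℕ) : Submodule ℝ (S.Hc k) :=
  ((((S.Ω (k - 2 * r) ⊓ LinearMap.ker S.Λ ⊓ LinearMap.ker S.d).map (S.L ^ r)).comap
      (S.Zc k).subtype)).map ((S.Bc k).comap (S.Zc k).subtype).mkQ

end ClosedSymplecticManifold

namespace ClosedSymplecticManifold

variable {n : ℕ} (S : ClosedSymplecticManifold n)

/-- `d` commutes with `L`. -/
lemma d_L (β : S.M) : S.d (S.L β) = S.L (S.d β) := by
  have h := S.leibniz 2 S.ω S.ω_mem β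
  have h2 : ((-1 : ℝ) ^ (2 : ℤ)) = 1 := by norm_num
  rw [S.dω, h2] at h
  simpa [L] using h

/-- `d` commutes with `L ^ r`. -/
lemma d_L_pow (r : ℕ) (β : S.M) : S.d ((S.L ^ r) β) = (S.L ^ r) (S.d β) := by
  induction r with
  | zero => simp
  | succ r ih =>
    rw [pow_succ', Module.End.mul_apply, Module.End.mul_apply, d_L, ih]

/-- `L ^ r` is injective on forms of degree `j` with `0 ≤ j` and `j + r ≤ n`. -/
lemma L_pow_inj (r : ℕ) (j : ℤ) (hj : 0 ≤ j) (hr : j + r ≤ n) (α : S.M) (hα : α ∈ S.Ω j)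
    (h : (S.L ^ r) α = 0) : α = 0 := by
  obtain ⟨j, rfl⟩ := Int.eq_ofNat_of_zero_le hj
  have hr' : j + r ≤ n := by omega
  obtain ⟨m, hm⟩ := Nat.exists_eq_add_of_le hr'
  refine S.lefschetz_inj (m + r) (by omega) α ?_ ?_
  · have : (n : ℤ) - ((m + r : ℕ) : ℤ) = (j : ℤ) := by omega
    rw [this]; exact hα
  · change (S.L ^ (m + r)) α = 0
    rw [pow_add, Module.End.mul_apply, h, map_zero]

/-- In degrees `k ≤ n`, the two families of subgroups coincide. -/
lemma Hsub_eq_LrH0 (k : ℕ) (hk : k ≤ n) (r : ℕ) : S.Hsub (k : ℤ) r = S.LrH0 (k : ℤ) r := by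
  unfold Hsub LrH0
  congr 1
  ext z
  simp only [Submodule.mem_comap, Submodule.mem_map, Submodule.mem_inf, LinearMap.mem_ker]
  constructor
  · rintro ⟨β, ⟨hβ, hΛ⟩, hz⟩
    refine ⟨β, ⟨⟨hβ, hΛ⟩, ?_⟩, hz⟩
    have hdz : S.d (z : S.M) = 0 := LinearMap.mem_ker.1 (Submodule.mem_inf.1 z.2).2
    have h0 : (S.L ^ r) (S.d β) = 0 := by
      rw [← d_L_pow, hz]; exact hdz
    rcases Nat.eq_zero_or_pos r with rfl | hr
    · simpa using h0
    · by_cases hs : (k : ℤ) - 2 * r < 0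
      · rw [S.Ω_neg _ hs, Submodule.mem_bot] at hβ
        rw [hβ, map_zero]
      · exact S.L_pow_inj r ((k : ℤ) - 2 * r + 1) (by omega) (by omega) _
          (S.d_mem _ β hβ) h0
  · rintro ⟨β, ⟨⟨hβ, hΛ⟩, _⟩, hz⟩
    exact ⟨β, ⟨hβ, hΛ⟩, hz⟩

end ClosedSymplecticManifold

/-- **Remark.** Let `X` be a `2n`-dimensional closed manifold endowed with a symplectic
structure `ω`, and let `k ≤ n`. Then `H^k_dR(X;ℝ) = ⊕_{r ∈ ℕ} H^{(r, k-2r)}_ω(X;ℝ)` if and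
only if `H^k_dR(X;ℝ) = ⊕_{r ∈ ℕ} L^r H^{(0, k-2r)}_ω(X;ℝ)`. -/
theorem decomposition_iff_LrH0 {n : ℕ} (S : ClosedSymplecticManifold n) (k : ℕ)
    (hk : k ≤ n) :
    DirectSum.IsInternal (fun r : ℕ => S.Hsub (k : ℤ) r) ↔
    DirectSum.IsInternal (fun r : ℕ => S.LrH0 (k : ℤ) r) := by
  have h : (fun r : ℕ => S.Hsub (k : ℤ) r) = fun r : ℕ => S.LrH0 (k : ℤ) r :=
    funext fun r => S.Hsub_eq_LrH0 k hk r
  rw [h]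

end
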